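/- arXiv:1605.07330 — 2 statements merged into one kernel-verified Lean document; each statement's English description precedes it below -/
import Mathlib

section
/- J commutes with the Farey map: for every a ∈ X with a ≠ (1), J(T_F(a)) = T_F(J(a)). -/
/-- Finite continued fraction `[0; n₁, …, n_k] = 1/(n₁ + 1/(n₂ + ⋯ + 1/n_k))`,
with the empty tuple giving `0`. -/
def cf : List ℕ → ℚ
  | [] => 0
  | n :: t => 1 / (n + cf t)

/-- `theta (n₁, …, n_k) = [0; n₁, …, n_k, 1]`. -/
def theta (a : List ℕ) : ℚ := cf (a ++ [1])

/-- Membership in `X`: a nonempty tuple of positive integers. -/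
def IsX (a : List ℕ) : Prop := a ≠ [] ∧ ∀ n ∈ a, 0 < n

/-- The monoid operation `⋆` on `X` (concatenation of paths in the Farey tree),
with the zero-elimination rules `(…, m, 0, n, …) = (…, m + n, …)` and a trailing
zero dropped, built into the definition. -/
def star (x y : List ℕ) : List ℕ :=
  match y with
  | [] => x
  | m :: rest =>
    if x.length % 2 = 0 then
      if m = 1 then
        match rest with
        | [] => x
        | m2 :: rest2 => x.dropLast ++ (x.getLastD 0 + m2) :: rest2
      else x ++ (m - 1) :: rest
    else x.dropLast ++ (x.getLastD 0 + m - 1) :: rest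

/-- The involution `K`: `K(1) = (1)`, `K(1, n₂, …, n_k) = (n₂+1, n₃, …, n_k)`,
and `K(n₁, …, n_k) = (1, n₁−1, n₂, …, n_k)` for `n₁ ≥ 2`. -/
def K : List ℕ → List ℕ
  | [] => []
  | [1] => [1]
  | 1 :: n :: rest => (n + 1) :: rest
  | n :: rest => 1 :: (n - 1) :: rest

/-- The Farey map on tuples: `(n₁, …, n_k) ↦ (n₁ − 1, n₂, …, n_k)` if `n₁ ≥ 2`,
and `(1, n₂, …, n_k) ↦ (n₂, …, n_k)`. -/
def TF : List ℕ → List ℕ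
  | [] => []
  | 1 :: rest => rest
  | n :: rest => (n - 1) :: rest

/-- The flipped Farey map (parent map in the Farey tree):
`(n₁, …, n_k) ↦ (n₁, …, n_k − 1)`, a trailing zero being dropped. -/
def TpF (a : List ℕ) : List ℕ := (TF a.reverse).reverse

/-- Auxiliary: continuant computed from the front. -/
def contAux : List ℕ → ℕ
  | [] => 1
  | [n] => n
  | n :: m :: rest => n * contAux (m :: rest) + contAux rest

/-- The continuant `⟨n₁, …, n_k⟩`: `⟨⟩ = 1`, `⟨n₁⟩ = n₁`,
`⟨n₁, …, n_k⟩ = n_k ⟨n₁, …, n_{k−1}⟩ + ⟨n₁, …, n_{k−2}⟩`. -/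
def cont (a : List ℕ) : ℕ := contAux a.reverse

/-- Length of the Farey interval `I(a)`, the interval with endpoints
`[0; n₁, …, n_{k−1}]` and `[0; n₁, …, n_k]`. -/
def ilen (a : List ℕ) : ℚ := |cf a - cf a.dropLast|

/-- Auxiliary for `J`: process the middle entries `n₂, …, n_{k−1}`, keeping the
output built so far in reversed order; an entry `n ≥ 2` contributes the block
`1_{n−2}, 2`, while an entry `n = 1` contributes `1_{−1}, 2`, which is resolved
by the rule `(…, m, 1_{−1}, 2, …) = (…, m + 1, …)`. -/
def Jmid : List ℕ → List ℕ → List ℕ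
  | [], out => out
  | n :: rest, out =>
    if n = 1 then
      Jmid rest (match out with
        | [] => [1]
        | h :: t => (h + 1) :: t)
    else
      Jmid rest (2 :: (List.replicate (n - 2) 1 ++ out))

/-- Dyer's involution `J` (jimm) on tuples: `J(n₁) = 1_{n₁}` and, for `k ≥ 2`,
`J(n₁, …, n_k) = (1_{n₁−1}, 2, 1_{n₂−2}, 2, …, 1_{n_{k−1}−2}, 2, 1_{n_k−1})`,
with `1_0` deleted and `1_{−1}` resolved by `(…, m, 1_{−1}, n, …) = (…, m+n−1, …)`. -/
def J : List ℕ → List ℕ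
  | [] => []
  | [n] => List.replicate n 1
  | n :: rest =>
      (Jmid rest.dropLast (2 :: List.replicate (n - 1) 1)).reverse
        ++ List.replicate (rest.getLastD 1 - 1) 1

theorem Jmid_append (l : List ℕ) : ∀ (h : ℕ) (t s : List ℕ),
    Jmid l (h :: (t ++ s)) = Jmid l (h :: t) ++ s := by
  induction l with
  | nil => intro h t s; simp [Jmid]
  | cons n r ih =>
    intro h t s
    by_cases hn : n = 1
    · simp only [Jmid, hn, if_true]
      exact ih _ _ _
    · simp only [Jmid, hn, if_false]
      rw [← ih]
      simp

theorem TF_succ (n : ℕ) (t : List ℕ) : TF ((n + 2) :: t) = (n + 1) :: t := by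
  simp [TF]

theorem TF_one (t : List ℕ) : TF (1 :: t) = t := by
  simp [TF]

theorem TF_Jmid (l : List ℕ) : ∀ (h : ℕ) (s : List ℕ),
    TF ((Jmid l [h + 2]).reverse ++ s) = (Jmid l [h + 1]).reverse ++ s := by
  induction l with
  | nil => intro h s; simp [Jmid, TF_succ]
  | cons n r ih =>
    intro h s
    by_cases hn : n = 1
    · simp only [Jmid, hn, if_true]
      exact ih (h + 1) s
    · simp only [Jmid, hn, if_false]
      rw [Jmid_append, Jmid_append]
      simp [TF_succ]

/-- `J` commutes with the Farey map. -/
theorem J_comm_TF (a : List ℕ) (h : IsX a) (h1 : a ≠ [1]) :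
    J (TF a) = TF (J a) := by
  obtain ⟨hne, hpos⟩ := h
  match a, hne, hpos, h1 with
  | [0], _, hpos, _ => simp at hpos
  | [1], _, _, h1 => exact absurd rfl h1
  | [n + 2], _, _, _ =>
    simp [TF_succ, J, List.replicate_succ, TF_one]
  | 0 :: _ :: _, _, hpos, _ => simp at hpos
  | (n + 2) :: m :: r, _, _, _ =>
    rw [TF_succ]
    simp only [J, Nat.add_sub_cancel, show n + 2 - 1 = n + 1 from rfl]
    rw [List.replicate_succ', Jmid_append]
    simp [TF_one]
  | [1, m], _, hpos, _ =>
    obtain ⟨k, rfl⟩ : ∃ k, m = k + 1 := ⟨m - 1, by have := hpos m (by simp); omega⟩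
    rw [TF_one]
    simp [J, Jmid, TF, List.replicate_succ]
  | 1 :: m :: p :: r, _, hpos, _ =>
    have hm : 0 < m := hpos m (by simp)
    rw [TF_one]
    by_cases h1 : m = 1
    · subst h1
      simp [J, Jmid]
      have := TF_Jmid (p :: r).dropLast 1
      simp at this
      rw [this]
    · obtain ⟨k, rfl⟩ : ∃ k, m = k + 2 := ⟨m - 2, by omega⟩
      have e1 : Jmid (p :: r).dropLast (2 :: List.replicate (k + 1) 1)
          = Jmid (p :: r).dropLast (2 :: List.replicate k 1) ++ [1] := by
        rw [List.replicate_succ', Jmid_append]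
      have e2 := Jmid_append (p :: r).dropLast 2 (List.replicate k 1) [2]
      simp [J, Jmid, e1, e2, TF]
end

section
/- The Lebesgue transition function is symmetric under J: for every a ∈ X with a ≠ (1), Π(J(a)) = J(Π(a)), where Π : X → X represents the Lebesgue transition function in the sense that θ(Π(a)) = π_λ(a) = |I(a)|/|I(T_{φF}(a))|. -/
/-- The tuple-level Lebesgue transition function `Π`:
`Π(n₁) = (1, n₁ − 2)` and, for `k ≥ 2`,
`Π(n₁, …, n_k) = (1, n_k − 1, n_{k−1}, …, n₂, n₁ − 1)`, with zero entries
eliminated by `(…, m, 0, n, …) = (…, m + n, …)`, `(0, n, …) = (n, …)`, and a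
trailing zero dropped. -/
def PiL (a : List ℕ) : List ℕ :=
  match a.reverse with
  | [] => []
  | [n] => if n ≤ 2 then [1] else [1, n - 2]
  | m :: t =>
      let t' := t.dropLast ++ (if t.getLastD 1 = 1 then [] else [t.getLastD 1 - 1])
      if m = 1 then
        match t' with
        | [] => [1]
        | h :: t2 => (1 + h) :: t2
      else 1 :: (m - 1) :: t'

/-- Increment the head. -/
def incH : List ℕ → List ℕ
  | [] => []
  | h :: t => (h + 1) :: t

/-- Composition coded by a cut word (`true` = cut). -/
def dec : List Bool → List ℕ
  | [] => [1]
  | true :: w => 1 :: dec w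
  | false :: w => incH (dec w)

theorem dec_cons (w : List Bool) : ∃ h t, dec w = (h + 1) :: t := by
  induction w with
  | nil => exact ⟨0, [], rfl⟩
  | cons b w ih =>
    obtain ⟨h, t, e⟩ := ih
    cases b
    · exact ⟨h + 1, t, by simp [dec, e, incH]⟩
    · exact ⟨0, dec w, rfl⟩

theorem dec_app (w : List Bool) : ∃ l m, dec w = l ++ [m + 1] ∧
    dec (w ++ [true]) = l ++ [m + 1, 1] ∧ dec (w ++ [false]) = l ++ [m + 2] := by
  induction w with
  | nil => exact ⟨[], 0, rfl, rfl, rfl⟩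
  | cons b w ih =>
    obtain ⟨l, m, e1, e2, e3⟩ := ih
    cases b
    · cases l with
      | nil => exact ⟨[], m + 1, by simp [dec, e1, incH], by simp [dec, e2, incH],
          by simp [dec, e3, incH]⟩
      | cons h t => exact ⟨(h + 1) :: t, m, by simp [dec, e1, incH], by simp [dec, e2, incH],
          by simp [dec, e3, incH]⟩
    · exact ⟨1 :: l, m, by simp [dec, e1], by simp [dec, e2], by simp [dec, e3]⟩

theorem dec_rev (w : List Bool) : dec w.reverse = (dec w).reverse := by
  induction w with
  | nil => rfl
  | cons b w ih =>
    obtain ⟨l, m, e1, e2, e3⟩ := dec_app w.reverse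
    have e : dec w = (m + 1) :: l.reverse := by
      have := congrArg List.reverse ih
      rw [e1] at this; simpa using this.symm
    cases b
    · rw [List.reverse_cons, e3]; simp [dec, e, incH]
    · rw [List.reverse_cons, e2]; simp [dec, e]

theorem dec_surj (a : List ℕ) (h : IsX a) : ∃ w, dec w = a := by
  obtain ⟨h0, h⟩ := h
  induction a with
  | nil => exact absurd rfl h0
  | cons n t ih =>
    have base : ∃ w, dec w = 1 :: t := by
      cases t with
      | nil => exact ⟨[], rfl⟩
      | cons k t =>
        obtain ⟨w, e⟩ := ih (by simp) (fun x hx => h x (by simp_all))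
        exact ⟨true :: w, by simp [dec, e]⟩
    have hn := h n (by simp)
    obtain ⟨k, rfl⟩ : ∃ k, n = k + 1 := ⟨n - 1, by omega⟩
    clear h ih h0 hn
    induction k with
    | zero => simpa using base
    | succ k ihk =>
      obtain ⟨w, e⟩ := ihk
      exact ⟨false :: w, by simp [dec, e, incH]⟩

theorem Jmid_app (l : List ℕ) : ∀ (h : ℕ) (out s : List ℕ),
    Jmid l (h :: out ++ s) = Jmid l (h :: out) ++ s := by
  induction l with
  | nil => intros; rfl
  | cons n l ih =>
    intro h out s
    by_cases hn : n = 1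
    · simp only [Jmid, hn, if_true]
      exact ih (h + 1) out s
    · simp only [Jmid, hn, if_false]
      rw [← ih]; simp

theorem Jmid_one (l : List ℕ) : ∃ s d, ∀ h, Jmid l [h] = s ++ [h + d] := by
  induction l with
  | nil => exact ⟨[], 0, fun h => rfl⟩
  | cons n l ih =>
    by_cases hn : n = 1
    · obtain ⟨s, d, e⟩ := ih
      refine ⟨s, d + 1, fun h => ?_⟩
      simp only [Jmid, hn, if_true]
      rw [e]; simp; omega
    · refine ⟨Jmid l (2 :: List.replicate (n - 2) 1), 0, fun h => ?_⟩
      simp only [Jmid, hn, if_false]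
      rw [← List.cons_append, Jmid_app]; simp

theorem J_succ (n : ℕ) (t : List ℕ) : J ((n + 2) :: t) = 1 :: J ((n + 1) :: t) := by
  cases t with
  | nil => simp [J, List.replicate_succ]
  | cons m t =>
    have := Jmid_app ((m :: t).dropLast) 2 (List.replicate n 1) [1]
    have e : (2 :: List.replicate n 1 ++ [1] : List ℕ) = 2 :: List.replicate (n + 1) 1 := by
      rw [List.replicate_succ']; rfl
    rw [e] at this
    simp [J, this]

theorem J_one (n : ℕ) (t : List ℕ) : J (1 :: (n + 1) :: t) = incH (J ((n + 1) :: t)) := by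
  cases t with
  | nil => simp [J, Jmid, List.replicate_succ, incH]
  | cons m t =>
    cases n with
    | zero =>
      obtain ⟨s, d, e⟩ := Jmid_one ((m :: t).dropLast)
      simp [J, Jmid, e, incH]; omega
    | succ n =>
      have h1 := Jmid_app ((m :: t).dropLast) 2 (List.replicate n 1) [1]
      have h2 := Jmid_app ((m :: t).dropLast) 2 (List.replicate n 1) [2]
      have e : (2 :: List.replicate n 1 ++ [1] : List ℕ) = 2 :: List.replicate (n + 1) 1 := by
        rw [List.replicate_succ']; rfl
      rw [e] at h1
      rw [List.cons_append] at h2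
      simp [J, Jmid, h1, h2, incH]

theorem J_dec (w : List Bool) : J (dec w) = dec (w.map not) := by
  induction w with
  | nil => rfl
  | cons b w ih =>
    obtain ⟨h, t, e⟩ := dec_cons w
    cases b
    · simp only [dec, List.map, Bool.not_false, ← ih, e, incH]
      exact J_succ h t
    · simp only [dec, List.map, Bool.not_true, ← ih, e]
      exact J_one h t

/-- Decrement the last entry. -/
def decL (t : List ℕ) : List ℕ :=
  t.dropLast ++ (if t.getLastD 1 = 1 then [] else [t.getLastD 1 - 1])

theorem decL_dec (x : List Bool) (d : Bool) : decL (dec (x ++ [d])) = dec x := by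
  obtain ⟨l, m, e1, e2, e3⟩ := dec_app x
  cases d
  · rw [e3, e1]; simp [decL]
  · rw [e2, e1]
    have : l ++ [m + 1, 1] = (l ++ [m + 1]) ++ [1] := by simp
    rw [this]; simp only [decL, List.dropLast_concat, List.getLastD_concat]; simp

/-- The body of `PiL`. -/
def PiR (a : List ℕ) : List ℕ :=
  match a with
  | [] => []
  | [n] => if n ≤ 2 then [1] else [1, n - 2]
  | m :: t =>
      if m = 1 then
        match decL t with
        | [] => [1]
        | h :: t2 => (1 + h) :: t2
      else 1 :: (m - 1) :: decL t

theorem PiL_eq (a : List ℕ) : PiL a = PiR a.reverse := by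
  unfold PiL PiR decL
  rfl

theorem PiR_cons (m k : ℕ) (t : List ℕ) : PiR (m :: k :: t) =
      if m = 1 then
        match decL (k :: t) with
        | [] => [1]
        | h :: t2 => (1 + h) :: t2
      else 1 :: (m - 1) :: decL (k :: t) := rfl

theorem PiR_dec (c : Bool) (v : List Bool) :
    PiR (dec (c :: v)) = dec (((!c) :: v).dropLast) := by
  rcases List.eq_nil_or_concat v with rfl | ⟨x, d, rfl⟩
  · cases c <;> rfl
  · have hD := decL_dec x d
    obtain ⟨h, t, e⟩ := dec_cons (x ++ [d])
    obtain ⟨h', t', e'⟩ := dec_cons x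
    have hdl : (((!c) :: (x ++ [d])).dropLast) = (!c) :: x := by
      rw [← List.cons_append, List.dropLast_concat]
    simp only [List.concat_eq_append]
    rw [hdl]
    cases c
    · simp only [dec, e, incH, Bool.not_false]
      rw [e] at hD
      cases t with
      | nil =>
        rw [← hD]
        rcases Nat.eq_zero_or_pos h with rfl | hp
        · rw [e'] at hD; simp [decL] at hD
        · have : h ≠ 0 := by omega
          simp [decL, PiR, this]
      | cons k t =>
        rw [PiR_cons, ← hD]
        simp [decL]
    · simp only [dec, Bool.not_true, e]
      rw [PiR_cons, ← e, hD, e']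
      simp [incH]; omega

theorem PiL_dec (w : List Bool) (c : Bool) :
    PiL (dec (w ++ [c])) = dec (((!c) :: w.reverse).dropLast) := by
  rw [PiL_eq, ← dec_rev, List.reverse_append]
  exact PiR_dec c w.reverse

theorem part2 (a : List ℕ) (h : IsX a) (h1 : a ≠ [1]) : PiL (J a) = J (PiL a) := by
  obtain ⟨w, rfl⟩ := dec_surj a h
  rcases List.eq_nil_or_concat w with rfl | ⟨x, d, rfl⟩
  · exact absurd rfl h1
  · rw [List.concat_eq_append, PiL_dec, J_dec, J_dec, List.map_append]
    simp only [List.map_cons, List.map_nil]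
    rw [PiL_dec]
    simp [List.map_dropLast]

theorem cf_nonneg (l : List ℕ) : 0 ≤ cf l := by
  induction l with
  | nil => exact le_refl _
  | cons n t ih => simp only [cf]; positivity

/-- Denominators. -/
def qq : List ℕ → ℚ × ℚ
  | [] => (1, 0)
  | n :: r => (n * (qq r).1 + (qq r).2, (qq r).1)

theorem qq_pos (l : List ℕ) (h : ∀ n ∈ l, 0 < n) : 0 < (qq l).1 ∧ 0 ≤ (qq l).2 := by
  induction l with
  | nil => simp [qq]
  | cons n t ih =>
    obtain ⟨h1, h2⟩ := ih (fun x hx => h x (by simp [hx]))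
    have hn : (0 : ℚ) < n := by exact_mod_cast h n (by simp)
    simp only [qq]
    constructor <;> positivity

theorem cf_qq (l : List ℕ) (h : ∀ n ∈ l, 0 < n) : cf l = (qq l).2 / (qq l).1 := by
  induction l with
  | nil => simp [qq, cf]
  | cons n t ih =>
    have hh : ∀ n ∈ t, 0 < n := fun x hx => h x (by simp [hx])
    obtain ⟨h1, h2⟩ := qq_pos t hh
    have hn : (0 : ℚ) < n := by exact_mod_cast h n (by simp)
    simp only [qq, cf, ih hh]
    field_simp

/-- Continued fraction with a tail. -/
def cfx : List ℕ → ℚ → ℚ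
  | [], x => x
  | n :: t, x => 1 / (n + cfx t x)

theorem cf_app (l s : List ℕ) : cf (l ++ s) = cfx l (cf s) := by
  induction l with
  | nil => rfl
  | cons n t ih => simp [cf, cfx, ih]

theorem cfx_app (l s : List ℕ) (x : ℚ) : cfx (l ++ s) x = cfx l (cfx s x) := by
  induction l with
  | nil => rfl
  | cons n t ih => simp [cfx, ih]

theorem cfx_mob (r : List ℕ) (h : ∀ n ∈ r, 0 < n) : ∃ p p' : ℚ,
    |p' * (qq r).1 - p * (qq r).2| = 1 ∧
    ∀ x : ℚ, 0 ≤ x → cfx r.reverse x = (p + p' * x) / ((qq r).1 + (qq r).2 * x) := by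
  induction r with
  | nil => exact ⟨0, 1, by simp [qq], fun x hx => by simp [qq, cfx]⟩
  | cons n t ih =>
    have hh : ∀ n ∈ t, 0 < n := fun x hx => h x (by simp [hx])
    obtain ⟨h1, h2⟩ := qq_pos t hh
    have hn : (0 : ℚ) < n := by exact_mod_cast h n (by simp)
    obtain ⟨p, p', e1, e2⟩ := ih hh
    refine ⟨p * n + p', p, ?_, fun x hx => ?_⟩
    · rw [← e1, ← abs_neg]; simp only [qq]; congr 1; ring
    · rw [List.reverse_cons, cfx_app]
      simp only [cfx]
      rw [e2 _ (by positivity)]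
      simp only [qq]
      have hx' : 0 < (n : ℚ) + x := by positivity
      rw [div_eq_div_iff (by positivity) (by positivity)]
      field_simp
      ring

theorem ilen_rev (m : ℕ) (r : List ℕ) (h : ∀ n ∈ m :: r, 0 < n) :
    ilen (m :: r).reverse = 1 / ((qq r).1 * (qq (m :: r)).1) := by
  have hh : ∀ n ∈ r, 0 < n := fun x hx => h x (by simp [hx])
  obtain ⟨h1, h2⟩ := qq_pos r hh
  have hm : (0 : ℚ) < m := by exact_mod_cast h m (by simp)
  obtain ⟨p, p', e1, e2⟩ := cfx_mob r hh
  have c0 : cf r.reverse = cfx r.reverse 0 := by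
    have := cf_app r.reverse []
    simpa [cf] using this
  rw [ilen, List.reverse_cons, List.dropLast_concat, cf_app, c0]
  simp only [cf]
  rw [e2 _ (by positivity), e2 _ le_rfl]
  have : (p + p' * (1 / ((m : ℚ) + 0))) / ((qq r).1 + (qq r).2 * (1 / ((m : ℚ) + 0))) -
      (p + p' * 0) / ((qq r).1 + (qq r).2 * 0)
      = (p' * (qq r).1 - p * (qq r).2) * (1 / ((qq r).1 * (qq (m :: r)).1)) := by
    simp only [qq]
    have : 0 < (m : ℚ) * (qq r).1 + (qq r).2 := by positivity
    field_simp
    ring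
  rw [this, abs_mul, e1, one_mul, abs_of_nonneg]
  simp only [qq]
  positivity

theorem cf_decL (t : List ℕ) (h0 : t ≠ []) (h : ∀ n ∈ t, 0 < n) :
    cf (decL t ++ [1]) = cf t := by
  rcases List.eq_nil_or_concat t with rfl | ⟨l, m, rfl⟩
  · exact absurd rfl h0
  · rw [List.concat_eq_append] at *
    have hm : 0 < m := h m (by simp)
    simp only [decL, List.dropLast_concat, List.getLastD_concat]
    obtain ⟨k, rfl⟩ : ∃ k, m = k + 1 := ⟨m - 1, by omega⟩
    rcases Nat.eq_zero_or_pos k with rfl | hk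
    · simp
    · have : k ≠ 0 := by omega
      simp only [Nat.add_eq_right, this, if_false, List.append_assoc]
      rw [cf_app, cf_app l]
      simp [cf]

theorem theta_PiR (m : ℕ) (t : List ℕ) (h : ∀ n ∈ m :: t, 0 < n) (h1 : m :: t ≠ [1]) :
    theta (PiR (m :: t)) = 1 - cf (m :: t) := by
  have hm : 0 < m := h m (by simp)
  cases t with
  | nil =>
    have hm1 : m ≠ 1 := by rintro rfl; exact h1 rfl
    obtain ⟨k, rfl⟩ : ∃ k, m = k + 2 := ⟨m - 2, by omega⟩
    rcases Nat.eq_zero_or_pos k with rfl | hk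
    · norm_num [PiR, theta, cf]
    · have : k ≠ 0 := by omega
      have : (0 : ℚ) < k := by exact_mod_cast hk
      simp [PiR, theta, cf, *]
      field_simp
      ring
  | cons k t =>
    have hh : ∀ n ∈ k :: t, 0 < n := fun x hx => h x (by simp_all)
    have hc := cf_decL (k :: t) (by simp) hh
    have hk : 0 < k := h k (by simp)
    have hp : 0 < cf (k :: t) := by
      have := cf_nonneg t
      have : (0 : ℚ) < k := by exact_mod_cast hk
      simp only [cf]; positivity
    rw [PiR_cons]
    show _ = 1 - 1 / ((m : ℚ) + cf (k :: t))
    rw [← hc] at hp ⊢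
    by_cases hm1 : m = 1
    · subst hm1
      simp only [if_true]
      generalize decL (k :: t) = D at *
      cases D with
      | nil => norm_num [theta, cf]
      | cons d D =>
        have := cf_nonneg (D ++ [1])
        simp only [theta, List.cons_append, cf] at hp ⊢
        have hd : 0 < (d : ℚ) + cf (D ++ [1]) := by simpa using hp
        generalize cf (D ++ [1]) = y at *
        push_cast
        have : 0 < 1 + (d : ℚ) + y := by linarith
        field_simp
        ring
    · simp only [hm1, if_false, theta, List.cons_append, cf]
      generalize cf (decL (k :: t) ++ [1]) = y at *
      obtain ⟨j, rfl⟩ : ∃ j, m = j + 1 := ⟨m - 1, by omega⟩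
      simp only [Nat.add_sub_cancel]
      push_cast
      have : 0 < (j : ℚ) + y := by positivity
      have : 0 < (j : ℚ) + 1 + y := by positivity
      have : 0 < (j : ℚ) + y + 1 := by positivity
      field_simp
      ring

theorem part1 (m : ℕ) (t : List ℕ) (h : ∀ n ∈ m :: t, 0 < n) (h1 : m :: t ≠ [1]) :
    theta (PiR (m :: t)) = ilen (m :: t).reverse / ilen (TF (m :: t)).reverse := by
  have hh : ∀ n ∈ t, 0 < n := fun x hx => h x (by simp_all)
  have hm : 0 < m := h m (by simp)
  rw [theta_PiR m t h h1, cf_qq _ h, ilen_rev m t h]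
  by_cases hm1 : m = 1
  · subst hm1
    cases t with
    | nil => exact absurd rfl h1
    | cons k t =>
      have h3 : ∀ n ∈ t, 0 < n := fun x hx => hh x (by simp_all)
      have hk : (0 : ℚ) < k := by exact_mod_cast hh k (by simp)
      rw [show TF (1 :: k :: t) = k :: t from rfl, ilen_rev k t hh]
      obtain ⟨q1, q2⟩ := qq_pos t h3
      simp only [qq]
      generalize (qq t).1 = q at *
      generalize (qq t).2 = q' at *
      have : 0 < (k : ℚ) * q + q' := by positivity
      push_cast
      have : 0 < 1 * ((k : ℚ) * q + q') + q := by positivity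
      field_simp
      ring
  · obtain ⟨j, rfl⟩ : ∃ j, m = j + 2 := ⟨m - 2, by omega⟩
    have : TF ((j + 2) :: t) = (j + 1) :: t := by simp [TF]
    rw [this, ilen_rev (j + 1) t (by simpa using hh)]
    obtain ⟨q1, q2⟩ := qq_pos t hh
    simp only [qq]
    generalize (qq t).1 = q at *
    generalize (qq t).2 = q' at *
    push_cast
    have : 0 < ((j : ℚ) + 1) * q + q' := by positivity
    have : 0 < ((j : ℚ) + 2) * q + q' := by positivity
    field_simp
    ring

/-- The Lebesgue transition function is symmetric under `J`: `Π` represents it,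
in the sense `θ(Π a) = π_λ(a) = |I(a)| / |I(T_{φF} a)|`, and `Π(J a) = J(Π a)`. -/
theorem lebesgue_J_symmetry (a : List ℕ) (h : IsX a) (h1 : a ≠ [1]) :
    theta (PiL a) = ilen a / ilen (TpF a) ∧ PiL (J a) = J (PiL a) := by
  refine ⟨?_, part2 a h h1⟩
  obtain ⟨r, rfl⟩ : ∃ r : List ℕ, a = r.reverse := ⟨a.reverse, by simp⟩
  rw [PiL_eq, TpF, List.reverse_reverse]
  cases r with
  | nil => exact absurd rfl h.1
  | cons m t =>
    refine part1 m t (fun n hn => h.2 n (List.mem_reverse.2 hn)) ?_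
    intro e
    rw [e] at h1
    exact h1 rfl
end
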